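/- Let k = 2d with d ≥ 1 and π ∈ S_k with ν(π) > 2. Let j = π(1) and let j' be the unique element of [k] congruent to j − o_j modulo k. Suppose j is not free, j' is not free, j' does not satisfy j ≈_π j', and j' occurs first in its block (i.e., π⁻¹(j') ≤ π⁻¹(j'') for all j'' with j'' ≈_π j'). Then there exists τ ∈ S_k related to π by a single prefix reversal with ν(π) − ν(τ) ≥ 2. -/

import Mathlib

/-- `π` and `τ` are related by a prefix reversal: there is `t ≤ k` such that the first `t`
entries are reversed and the remaining entries agree (0-indexed form of the paper's
1-indexed definition). -/
def PrefixRev (k : ℕ) (π τ : Equiv.Perm (Fin k)) : Prop :=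
  ∃ t : ℕ, ∃ ht : t ≤ k,
    (∀ i : Fin k, t ≤ (i : ℕ) → π i = τ i) ∧
    (∀ i : Fin k, ∀ hi : (i : ℕ) < t, π i = τ ⟨t - 1 - (i : ℕ), by omega⟩)

/-- `π` and `τ` are related by a suffix reversal: there is `t` such that the entries at
positions `< t` agree and the remaining entries are reversed. -/
def SuffixRev (k : ℕ) (π τ : Equiv.Perm (Fin k)) : Prop :=
  ∃ t : ℕ,
    (∀ i : Fin k, (i : ℕ) < t → π i = τ i) ∧
    (∀ i : Fin k, ∀ hi : t ≤ (i : ℕ), π i = τ ⟨k - 1 - (i : ℕ) + t, by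
      have := i.isLt; omega⟩)

/-- The pancake graph `P_k`, whose edges are prefix reversals. -/
def pancakeGraph (k : ℕ) : SimpleGraph (Equiv.Perm (Fin k)) :=
  SimpleGraph.fromRel (PrefixRev k)

/-- The graph `G_k`, whose edges are prefix and suffix reversals. -/
def prefixSuffixGraph (k : ℕ) : SimpleGraph (Equiv.Perm (Fin k)) :=
  SimpleGraph.fromRel (fun π τ => PrefixRev k π τ ∨ SuffixRev k π τ)

/-- The values of `π` at positions `p` and `q` differ by `1`, or are `{1, k}`
(1-indexed), i.e. `{0, k - 1}` in this 0-indexed formalization. -/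
def PiAdjacency (k : ℕ) (π : Equiv.Perm (Fin k)) (p q : Fin k) : Prop :=
  (((π p : ℕ) : ℤ) - ((π q : ℕ) : ℤ)).natAbs = 1 ∨
    ({(π p : ℕ), (π q : ℕ)} : Set ℕ) = {0, k - 1}

/-- Positions `i` and `i + 1` (0-indexed) form a `π`-adjacency. -/
def PosAdjacency (k : ℕ) (π : Equiv.Perm (Fin k)) (i : ℕ) : Prop :=
  ∃ h : i + 1 < k, PiAdjacency k π ⟨i, by omega⟩ ⟨i + 1, h⟩

/-- The equivalence relation `∼_π`: `a ∼_π b` iff every pair of consecutive positions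
between the position of `a` and the position of `b` is a `π`-adjacency. -/
def Sim (k : ℕ) (π : Equiv.Perm (Fin k)) (a b : Fin k) : Prop :=
  ∀ i : ℕ, min ((π.symm a : ℕ)) ((π.symm b : ℕ)) ≤ i →
    i < max ((π.symm a : ℕ)) ((π.symm b : ℕ)) → PosAdjacency k π i

/-- `∼_π` has exactly one equivalence class on `[k]`. -/
def OneClass (k : ℕ) (π : Equiv.Perm (Fin k)) : Prop :=
  ∀ a b : Fin k, Sim k π a b

/-- The pairing `φ(j) = j + o_j`, swapping `2i - 1 ↔ 2i` (1-indexed),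
i.e. `2i ↔ 2i + 1` (0-indexed). -/
def partner (d : ℕ) (j : Fin (2 * d)) : Fin (2 * d) :=
  ⟨if (j : ℕ) % 2 = 0 then (j : ℕ) + 1 else (j : ℕ) - 1, by
    have := j.isLt; split <;> omega⟩

/-- The equivalence relation `≈_π`. -/
def ApproxSim (d : ℕ) (π : Equiv.Perm (Fin (2 * d))) (a b : Fin (2 * d)) : Prop :=
  a = b ∨ (Sim (2 * d) π a b ∧ Sim (2 * d) π a (partner d a) ∧
    Sim (2 * d) π b (partner d b))

/-- `j` is free, i.e. `{j}` is an equivalence class (a singleton) of `≈_π`. -/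
def IsFree (d : ℕ) (π : Equiv.Perm (Fin (2 * d))) (j : Fin (2 * d)) : Prop :=
  ∀ j' : Fin (2 * d), ApproxSim d π j j' → j' = j

/-- The `≈_π`-equivalence class of `j`, as a finite set. -/
noncomputable def classOf (d : ℕ) (π : Equiv.Perm (Fin (2 * d))) (j : Fin (2 * d)) :
    Finset (Fin (2 * d)) :=
  @Finset.filter _ (fun j' => ApproxSim d π j j') (Classical.decPred _) Finset.univ

/-- `S(π)`, the number of singletons of `π`. -/
noncomputable def numSingletons (d : ℕ) (π : Equiv.Perm (Fin (2 * d))) : ℕ :=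
  (@Finset.filter _ (fun j => IsFree d π j) (Classical.decPred _) Finset.univ).card

/-- `B(π)`, the number of blocks (equivalence classes of `≈_π` of size `> 1`) of `π`. -/
noncomputable def numBlocks (d : ℕ) (π : Equiv.Perm (Fin (2 * d))) : ℕ :=
  ((Finset.univ.image (classOf d π)).filter (fun C => 1 < C.card)).card

/-- The potential function `ν(π) = (3/2) S(π) + 2 B(π)`. -/
noncomputable def nu (d : ℕ) (π : Equiv.Perm (Fin (2 * d))) : ℚ :=
  3 / 2 * (numSingletons d π : ℚ) + 2 * (numBlocks d π : ℚ)

/-- The unique element of `[k]` congruent to `j - o_j` modulo `k` (0-indexed form). -/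
def prevVal (d : ℕ) (j : Fin (2 * d)) : Fin (2 * d) :=
  ⟨if (j : ℕ) % 2 = 0 then ((j : ℕ) + 2 * d - 1) % (2 * d) else ((j : ℕ) + 1) % (2 * d), by
    have := j.isLt; split <;> exact Nat.mod_lt _ (by omega)⟩

/-!
Write `j = π(0)` and let `j'` be its neighbour other than `φ(j)` in the cyclic order of values, so
that the only neighbours of `j'` are `j` and `φ(j')`. The value just before `j'` in `π` is not
adjacent to `j'`: it is not `φ(j')` because `j'` comes first in its block, and it is not `j` because
`j` and `j'` lie in different blocks. So reversing everything before `j'` breaks no adjacency, and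
it brings `j` next to `j'`. The reversal therefore frees no element and merges the blocks of `j` and
`j'`, and any element that ceases to be free joins the merged block. Hence `S` does not grow and `B`
drops.
-/

theorem card_image_lt_card_image_of_factorsThrough {α β γ : Type*} [DecidableEq β] [DecidableEq γ]
    {s : Finset α} {f : α → β} {g : α → γ} (hgf : g.FactorsThrough f) {a b : α} (ha : a ∈ s)
    (hb : b ∈ s) (hf : f a ≠ f b) (hg : g a = g b) : (s.image g).card < (s.image f).card := by
  have : Nonempty γ := ⟨g a⟩
  obtain ⟨h, rfl⟩ := (Function.factorsThrough_iff g).1 hgf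
  rw [← Finset.image_image]
  exact Finset.card_image_le.lt_of_ne fun hcard ↦ hf <|
    Finset.card_image_iff.1 hcard (Finset.mem_image_of_mem f ha) (Finset.mem_image_of_mem f hb) hg

section Values

/-- Adjacency of values in the cyclic order of `Fin k`: the relation that `PiAdjacency` requires of
the values at two positions. -/
def CyclicAdj {k : ℕ} (x y : Fin k) : Prop :=
  (((x : ℕ) : ℤ) - ((y : ℕ) : ℤ)).natAbs = 1 ∨ ({(x : ℕ), (y : ℕ)} : Set ℕ) = {0, k - 1}

theorem CyclicAdj.symm {k : ℕ} {x y : Fin k} (h : CyclicAdj x y) : CyclicAdj y x := by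
  rwa [CyclicAdj, Set.pair_comm, ← Int.natAbs_neg, neg_sub]

variable {d : ℕ}

theorem partner_ne (a : Fin (2 * d)) : partner d a ≠ a := by
  simp only [partner, ne_eq, Fin.ext_iff]
  split_ifs <;> omega

theorem partner_partner (a : Fin (2 * d)) : partner d (partner d a) = a := by
  simp only [partner, Fin.ext_iff]
  split_ifs <;> omega

theorem val_prevVal (j : Fin (2 * d)) :
    (prevVal d j : ℕ) =
      if (j : ℕ) % 2 = 0 then if (j : ℕ) = 0 then 2 * d - 1 else (j : ℕ) - 1
      else if (j : ℕ) = 2 * d - 1 then 0 else (j : ℕ) + 1 := by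
  have hj := j.isLt
  simp only [prevVal]
  split_ifs with heven hzero hlast
  · rw [hzero, Nat.zero_add, Nat.mod_eq_of_lt (by omega)]
  · rw [Nat.sub_add_comm (by omega), Nat.add_mod_right, Nat.mod_eq_of_lt (by omega)]
  · rw [hlast, Nat.sub_add_cancel (by omega), Nat.mod_self]
  · rw [Nat.mod_eq_of_lt (by omega)]

theorem cyclicAdj_prevVal (j : Fin (2 * d)) : CyclicAdj j (prevVal d j) := by
  have hval := val_prevVal j
  rw [CyclicAdj, Set.pair_eq_pair_iff]
  split_ifs at hval <;> omega

theorem CyclicAdj.eq_partner_prevVal_or_eq {j x : Fin (2 * d)} (h : CyclicAdj x (prevVal d j)) :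
    x = partner d (prevVal d j) ∨ x = j := by
  have hval := val_prevVal j
  rw [CyclicAdj, Set.pair_eq_pair_iff] at h
  simp only [partner, Fin.ext_iff]
  split_ifs at hval ⊢ <;> omega

end Values

section Sim

variable {k : ℕ} {π : Equiv.Perm (Fin k)} {a b c : Fin k}

theorem Sim.symm (h : Sim k π a b) : Sim k π b a := by
  rwa [Sim, min_comm, max_comm]

theorem Sim.trans (hab : Sim k π a b) (hbc : Sim k π b c) : Sim k π a c := by
  intro m hmin hmax
  by_cases hm : min (π.symm a : ℕ) (π.symm b) ≤ m ∧ m < max (π.symm a : ℕ) (π.symm b)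
  · exact hab m hm.1 hm.2
  · exact hbc m (by omega) (by omega)

theorem PosAdjacency.sim {i : ℕ} (h : PosAdjacency k π i) (ha : (π.symm a : ℕ) = i)
    (hb : (π.symm b : ℕ) = i + 1) : Sim k π a b := by
  intro m hmin hmax
  obtain rfl : m = i := by omega
  exact h

theorem Sim.symm_le_iff_of_not_posAdjacency {i : Fin k} (hcut : ¬ PosAdjacency k π i)
    (h : Sim k π a b) : π.symm a ≤ i ↔ π.symm b ≤ i := by
  by_contra hsides
  rw [Fin.le_def, Fin.le_def] at hsides
  exact hcut (h i (by omega) (by omega))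

theorem Sim.symm_le_iff_or_sim_apply (h : Sim k π a b) (i : Fin k) :
    (π.symm a ≤ i ↔ π.symm b ≤ i) ∨ Sim k π a (π i) := by
  refine or_iff_not_imp_left.2 fun hsides m hmin hmax ↦ ?_
  rw [Fin.le_def, Fin.le_def] at hsides
  rw [Equiv.symm_apply_apply] at hmin hmax
  exact h m (by omega) (by omega)

end Sim

section Blocks

variable {d : ℕ} {π τ : Equiv.Perm (Fin (2 * d))} {a b c : Fin (2 * d)}

theorem not_isFree_iff_sim_partner : ¬ IsFree d π a ↔ Sim (2 * d) π a (partner d a) := by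
  refine ⟨fun h ↦ ?_, fun h hfree ↦ partner_ne a (hfree _ (.inr ⟨h, h, ?_⟩))⟩
  · simp only [IsFree, not_forall] at h
    obtain ⟨b, rfl | ⟨-, hpartner, -⟩, hne⟩ := h
    · exact absurd rfl hne
    · exact hpartner
  · rw [partner_partner]
    exact h.symm

theorem not_isFree_partner (ha : ¬ IsFree d π a) : ¬ IsFree d π (partner d a) := by
  rw [not_isFree_iff_sim_partner] at ha ⊢
  rw [partner_partner]
  exact ha.symm

theorem Sim.approxSim (h : Sim (2 * d) π a b) (ha : ¬ IsFree d π a) (hb : ¬ IsFree d π b) :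
    ApproxSim d π a b :=
  .inr ⟨h, not_isFree_iff_sim_partner.1 ha, not_isFree_iff_sim_partner.1 hb⟩

theorem approxSim_partner (ha : ¬ IsFree d π a) : ApproxSim d π a (partner d a) :=
  (not_isFree_iff_sim_partner.1 ha).approxSim ha (not_isFree_partner ha)

theorem ApproxSim.refl (a : Fin (2 * d)) : ApproxSim d π a a := .inl rfl

theorem ApproxSim.symm (h : ApproxSim d π a b) : ApproxSim d π b a := by
  rcases h with rfl | ⟨hab, ha, hb⟩
  · exact .inl rfl
  · exact .inr ⟨hab.symm, hb, ha⟩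

theorem ApproxSim.trans (hab : ApproxSim d π a b) (hbc : ApproxSim d π b c) :
    ApproxSim d π a c := by
  rcases hab with rfl | ⟨hab, ha, hb⟩
  · exact hbc
  rcases hbc with rfl | ⟨hbc, -, hc⟩
  · exact .inr ⟨hab, ha, hb⟩
  · exact .inr ⟨hab.trans hbc, ha, hc⟩

theorem mem_classOf : b ∈ classOf d π a ↔ ApproxSim d π a b := by
  simp [classOf]

theorem classOf_eq_classOf_iff : classOf d π a = classOf d π b ↔ ApproxSim d π a b := by
  refine ⟨fun h ↦ ?_, fun h ↦ ?_⟩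
  · rw [← mem_classOf, h, mem_classOf]
    exact .refl b
  · ext x
    rw [mem_classOf, mem_classOf]
    exact ⟨h.symm.trans, h.trans⟩

theorem one_lt_card_classOf_iff : 1 < (classOf d π a).card ↔ ¬ IsFree d π a := by
  rw [Finset.one_lt_card_iff_nontrivial, Finset.nontrivial_iff_ne_singleton
    (mem_classOf.2 (ApproxSim.refl a)), ne_eq, Finset.eq_singleton_iff_unique_mem]
  simp only [mem_classOf, ApproxSim.refl, true_and, IsFree]

open Classical in
theorem numBlocks_eq_card_image (d : ℕ) (π : Equiv.Perm (Fin (2 * d))) :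
    numBlocks d π = ((Finset.univ.filter (¬ IsFree d π ·)).image (classOf d π)).card := by
  simp only [numBlocks, Finset.filter_image, one_lt_card_classOf_iff]

theorem ApproxSim.mono (hle : ∀ a b, Sim (2 * d) π a b → Sim (2 * d) τ a b)
    (h : ApproxSim d π a b) : ApproxSim d τ a b :=
  h.imp_right fun ⟨hab, ha, hb⟩ ↦ ⟨hle _ _ hab, hle _ _ ha, hle _ _ hb⟩

theorem IsFree.anti (hle : ∀ a b, Sim (2 * d) π a b → Sim (2 * d) τ a b) (h : IsFree d τ a) :
    IsFree d π a :=
  fun b hb ↦ h b (hb.mono hle)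

theorem numSingletons_anti (hle : ∀ a b, Sim (2 * d) π a b → Sim (2 * d) τ a b) :
    numSingletons d τ ≤ numSingletons d π := by
  refine Finset.card_le_card fun a ha ↦ ?_
  simp only [Finset.mem_filter_univ] at ha ⊢
  exact ha.anti hle

theorem numBlocks_lt_numBlocks (hle : ∀ a b, Sim (2 * d) π a b → Sim (2 * d) τ a b)
    (hblocks : ∀ c, ¬ IsFree d τ c → ∃ c', ¬ IsFree d π c' ∧ ApproxSim d τ c' c)
    (ha : ¬ IsFree d π a) (hb : ¬ IsFree d π b) (hsep : ¬ ApproxSim d π a b)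
    (hmerge : ApproxSim d τ a b) : numBlocks d τ < numBlocks d π := by
  classical
  have hfactors : (classOf d τ).FactorsThrough (classOf d π) := fun x y hxy ↦
    classOf_eq_classOf_iff.2 ((classOf_eq_classOf_iff.1 hxy).mono hle)
  have hsubset : (Finset.univ.filter (¬ IsFree d τ ·)).image (classOf d τ) ⊆
      (Finset.univ.filter (¬ IsFree d π ·)).image (classOf d τ) := by
    simp only [Finset.image_subset_iff, Finset.mem_filter_univ, Finset.mem_image]
    intro c hc
    obtain ⟨c', hc', hcc'⟩ := hblocks c hc
    exact ⟨c', hc', classOf_eq_classOf_iff.2 hcc'⟩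
  rw [numBlocks_eq_card_image, numBlocks_eq_card_image]
  exact (Finset.card_le_card hsubset).trans_lt <|
    card_image_lt_card_image_of_factorsThrough hfactors (by simpa using ha)
      (by simpa using hb) (mt classOf_eq_classOf_iff.1 hsep) (classOf_eq_classOf_iff.2 hmerge)

theorem two_le_nu_sub_nu (hS : numSingletons d τ ≤ numSingletons d π)
    (hB : numBlocks d τ < numBlocks d π) : 2 ≤ nu d π - nu d τ := by
  have hS' : (numSingletons d τ : ℚ) ≤ numSingletons d π := mod_cast hS
  have hB' : (numBlocks d τ : ℚ) + 1 ≤ numBlocks d π := mod_cast hB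
  unfold nu
  linarith

end Blocks

section PrefixFlip

variable {k : ℕ} {π : Equiv.Perm (Fin k)} {a b i : Fin k}

/-- The permutation of positions that reverses `0, …, i` and fixes the later ones, so that
`π * prefixFlip i` is `π` with its first `i + 1` entries reversed. -/
def prefixFlip (i : Fin k) : Equiv.Perm (Fin k) :=
  Function.Involutive.toPerm (fun x ↦ if x ≤ i then i - x else x) fun x ↦ by
    by_cases hx : x ≤ i
    · have hval : ((i - x : Fin k) : ℕ) = i - x := Fin.sub_val_of_le hx
      have hle : i - x ≤ i := Fin.le_def.2 (by omega)
      simp only [if_pos hx, if_pos hle, Fin.ext_iff, Fin.sub_val_of_le hle]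
      omega
    · simp only [if_neg hx]

theorem prefixFlip_mul_self (i : Fin k) : prefixFlip i * prefixFlip i = 1 :=
  inv_mul_cancel (prefixFlip i)

theorem val_prefixFlip_of_le {x : Fin k} (hx : x ≤ i) : (prefixFlip i x : ℕ) = i - x :=
  (congrArg Fin.val (if_pos hx)).trans (Fin.sub_val_of_le hx)

theorem prefixFlip_of_lt {x : Fin k} (hx : i < x) : prefixFlip i x = x :=
  if_neg hx.not_ge

theorem prefixRev_mul_prefixFlip (π : Equiv.Perm (Fin k)) (i : Fin k) :
    PrefixRev k π (π * prefixFlip i) := by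
  refine ⟨i + 1, i.isLt, fun x hx ↦ ?_, fun x hx ↦ ?_⟩
  · rw [Equiv.Perm.mul_apply, prefixFlip_of_lt hx]
  · rw [Equiv.Perm.mul_apply, EmbeddingLike.apply_eq_iff_eq, Fin.ext_iff, val_prefixFlip_of_le]
    all_goals simp only [Fin.le_def]; omega

theorem prefixFlip_self (i : Fin k) : prefixFlip i i = ⟨0, i.pos⟩ :=
  Fin.ext (by rw [val_prefixFlip_of_le le_rfl, Nat.sub_self])

theorem symm_mul_prefixFlip_apply (π : Equiv.Perm (Fin k)) (i a : Fin k) :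
    (π * prefixFlip i).symm a = prefixFlip i (π.symm a) := rfl

theorem PosAdjacency.mul_prefixFlip_of_lt {m : ℕ} (h : PosAdjacency k π m) (hm : i < m) :
    PosAdjacency k (π * prefixFlip i) m := by
  obtain ⟨hmk, hadj⟩ := h
  refine ⟨hmk, ?_⟩
  rwa [PiAdjacency, Equiv.Perm.mul_apply, Equiv.Perm.mul_apply, prefixFlip_of_lt, prefixFlip_of_lt]
  all_goals simp only [Fin.lt_def]; omega

theorem PosAdjacency.mul_prefixFlip_of_add_eq {m n : ℕ} (h : PosAdjacency k π m)
    (hmn : m + n + 1 = i) : PosAdjacency k (π * prefixFlip i) n := by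
  obtain ⟨hmk, hadj⟩ := h
  have hflip : prefixFlip i ⟨n, by omega⟩ = ⟨m + 1, hmk⟩ := by
    rw [Fin.ext_iff, val_prefixFlip_of_le]
    all_goals simp only [Fin.le_def]; omega
  have hflip_succ : prefixFlip i ⟨n + 1, by omega⟩ = ⟨m, by omega⟩ := by
    rw [Fin.ext_iff, val_prefixFlip_of_le]
    all_goals simp only [Fin.le_def]; omega
  refine ⟨by omega, ?_⟩
  rw [PiAdjacency, Equiv.Perm.mul_apply, Equiv.Perm.mul_apply, hflip, hflip_succ]
  exact CyclicAdj.symm hadj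

theorem Sim.mul_prefixFlip (h : Sim k π a b) (hside : π.symm a ≤ i ↔ π.symm b ≤ i) :
    Sim k (π * prefixFlip i) a b := by
  intro m hmin hmax
  simp only [symm_mul_prefixFlip_apply] at hmin hmax
  by_cases ha : π.symm a ≤ i
  · have hb := hside.1 ha
    rw [val_prefixFlip_of_le ha, val_prefixFlip_of_le hb] at hmin hmax
    exact (h (i - 1 - m) (by omega) (by omega)).mul_prefixFlip_of_add_eq (by omega)
  · have hb := mt hside.2 ha
    rw [prefixFlip_of_lt (not_le.1 ha), prefixFlip_of_lt (not_le.1 hb)] at hmin hmax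
    exact (h m hmin hmax).mul_prefixFlip_of_lt (by omega)

theorem Sim.mul_prefixFlip_of_not_posAdjacency (h : Sim k π a b) (hcut : ¬ PosAdjacency k π i) :
    Sim k (π * prefixFlip i) a b :=
  h.mul_prefixFlip (h.symm_le_iff_of_not_posAdjacency hcut)

theorem sim_or_sim_apply_zero_of_sim_mul_prefixFlip (h : Sim k (π * prefixFlip i) a b) :
    Sim k π a b ∨ Sim k (π * prefixFlip i) a (π ⟨0, i.pos⟩) := by
  rw [← prefixFlip_self i, ← Equiv.Perm.mul_apply]
  refine (h.symm_le_iff_or_sim_apply i).imp_left fun hside ↦ ?_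
  simpa only [mul_assoc, prefixFlip_mul_self, mul_one] using h.mul_prefixFlip hside

theorem sim_apply_zero_mul_prefixFlip (ha : (π.symm a : ℕ) = i + 1)
    (hadj : CyclicAdj (π ⟨0, i.pos⟩) a) : Sim k (π * prefixFlip i) (π ⟨0, i.pos⟩) a := by
  have hi : (i : ℕ) + 1 < k := ha ▸ (π.symm a).isLt
  have hpos : π ⟨i + 1, hi⟩ = a := (Equiv.eq_symm_apply π).1 (Fin.ext ha.symm)
  have hflip : prefixFlip i ⟨i + 1, hi⟩ = ⟨i + 1, hi⟩ := prefixFlip_of_lt (Nat.lt_succ_self i)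
  have hnew : PosAdjacency k (π * prefixFlip i) i := by
    refine ⟨hi, ?_⟩
    rw [PiAdjacency, Equiv.Perm.mul_apply, Equiv.Perm.mul_apply, hflip, hpos, Fin.eta,
      prefixFlip_self]
    exact hadj
  refine hnew.sim ?_ ?_
  · rw [symm_mul_prefixFlip_apply, Equiv.symm_apply_apply, val_prefixFlip_of_le (Nat.zero_le _)]
    exact Nat.sub_zero _
  · rw [symm_mul_prefixFlip_apply, prefixFlip_of_lt (Fin.lt_def.2 (by omega)), ha]

end PrefixFlip

section Merging

variable {d : ℕ} {π : Equiv.Perm (Fin (2 * d))}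

theorem not_posAdjacency_of_symm_prevVal_le {j : Fin (2 * d)} {i : ℕ} (hj : ¬ IsFree d π j)
    (hj' : ¬ IsFree d π (prevVal d j)) (hsep : ¬ ApproxSim d π j (prevVal d j))
    (hle : π.symm (prevVal d j) ≤ π.symm (partner d (prevVal d j)))
    (hi : (π.symm (prevVal d j) : ℕ) = i + 1) : ¬ PosAdjacency (2 * d) π i := by
  intro hadj
  have ⟨hik, hval⟩ := hadj
  have hpos : π ⟨i + 1, hik⟩ = prevVal d j := (Equiv.eq_symm_apply π).1 (Fin.ext hi.symm)
  rw [PiAdjacency, hpos] at hval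
  rcases CyclicAdj.eq_partner_prevVal_or_eq hval with hpartner | heq
  · rw [← hpartner, Equiv.symm_apply_apply, Fin.le_def, hi] at hle
    exact Nat.not_succ_le_self i hle
  · refine hsep ((hadj.sim ?_ hi).approxSim hj hj')
    rw [← heq, Equiv.symm_apply_apply]

theorem two_le_nu_sub_nu_mul_prefixFlip {i j' : Fin (2 * d)} (hi : (π.symm j' : ℕ) = i + 1)
    (hadj : CyclicAdj (π ⟨0, i.pos⟩) j') (hcut : ¬ PosAdjacency (2 * d) π i)
    (hj : ¬ IsFree d π (π ⟨0, i.pos⟩)) (hj' : ¬ IsFree d π j')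
    (hsep : ¬ ApproxSim d π (π ⟨0, i.pos⟩) j') : 2 ≤ nu d π - nu d (π * prefixFlip i) := by
  have hle : ∀ a b, Sim (2 * d) π a b → Sim (2 * d) (π * prefixFlip i) a b :=
    fun a b h ↦ h.mul_prefixFlip_of_not_posAdjacency hcut
  have hjτ := mt (IsFree.anti hle) hj
  refine two_le_nu_sub_nu (numSingletons_anti hle)
    (numBlocks_lt_numBlocks hle (fun c hc ↦ ?_) hj hj' hsep ?_)
  · rcases sim_or_sim_apply_zero_of_sim_mul_prefixFlip (not_isFree_iff_sim_partner.1 hc) with h | h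
    · exact ⟨c, not_isFree_iff_sim_partner.2 h, .refl c⟩
    · exact ⟨_, hj, h.symm.approxSim hjτ hc⟩
  · exact (sim_apply_zero_mul_prefixFlip hi hadj).approxSim hjτ (mt (IsFree.anti hle) hj')

end Merging

/-- Let `k = 2d`, `d ≥ 1`, and `π ∈ S_k` with `ν(π) > 2`. Let
`j = π(1)` and `j'` the unique element of `[k]` congruent to `j - o_j` mod `k`. If `j`
and `j'` are not free, `j ≈_π j'` fails, and `j'` occurs first in its block, then there
is `τ` related to `π` by a single prefix reversal with `ν(π) - ν(τ) ≥ 2`. -/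
theorem statement_13 (d : ℕ) (hd : 1 ≤ d) (π : Equiv.Perm (Fin (2 * d)))
    (hν : 2 < nu d π)
    (hj : ¬ IsFree d π (π ⟨0, by omega⟩))
    (hj' : ¬ IsFree d π (prevVal d (π ⟨0, by omega⟩)))
    (hsep : ¬ ApproxSim d π (π ⟨0, by omega⟩) (prevVal d (π ⟨0, by omega⟩)))
    (hfirst : ∀ j'' : Fin (2 * d), ApproxSim d π (prevVal d (π ⟨0, by omega⟩)) j'' →
      (π.symm (prevVal d (π ⟨0, by omega⟩)) : ℕ) ≤ (π.symm j'' : ℕ)) :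
    ∃ τ : Equiv.Perm (Fin (2 * d)), PrefixRev (2 * d) π τ ∧
      2 ≤ nu d π - nu d τ := by
  have hpos : (π.symm (prevVal d (π ⟨0, by omega⟩)) : ℕ) ≠ 0 := fun h ↦
    hsep (.inl ((Equiv.eq_symm_apply π).1 (Fin.ext h.symm)))
  obtain ⟨i, hi⟩ := Nat.exists_eq_succ_of_ne_zero hpos
  have hik : i < 2 * d := by omega
  have hcut := not_posAdjacency_of_symm_prevVal_le hj hj' hsep
    (hfirst _ (approxSim_partner hj')) hi
  exact ⟨π * prefixFlip ⟨i, hik⟩, prefixRev_mul_prefixFlip π _,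
    two_le_nu_sub_nu_mul_prefixFlip hi (cyclicAdj_prevVal _) hcut hj hj' hsep⟩
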